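/- Let f : {0,1}^n → {0,1} be a Boolean function with f(0,…,0) = 0 and f(x) = 1 for every x ∈ {0,1}^n of Hamming weight exactly 1. Then the approximate degree satisfies deg̃(f) ≥ √(n/6). -/

import Mathlib

/-- The real value of a bit: `true ↦ 1`, `false ↦ 0`. -/
def bval (b : Bool) : ℝ := if b then 1 else 0

/-- The sensitivity `s(f)` of a Boolean function `f : {0,1}^n → {0,1}`:
the maximum over inputs `x` of the number of coordinates `i` such that flipping
the `i`-th bit of `x` changes the value of `f`. -/
def sens {n : ℕ} (f : (Fin n → Bool) → Bool) : ℕ :=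
  Finset.univ.sup fun x : Fin n → Bool =>
    (Finset.univ.filter fun i : Fin n => f (Function.update x i (!x i)) ≠ f x).card

/-- The block sensitivity `bs(f)` of a Boolean function `f : {0,1}^n → {0,1}`:
the maximum `t` such that there are an input `x` and `t` pairwise disjoint nonempty
blocks `B₁, …, B_t` of coordinates, flipping any one of which changes the value of `f`. -/
noncomputable def blockSens {n : ℕ} (f : (Fin n → Bool) → Bool) : ℕ :=
  sSup {t : ℕ | ∃ x : Fin n → Bool, ∃ B : Fin t → Finset (Fin n),
    (∀ i, (B i).Nonempty) ∧ (∀ i j, i ≠ j → Disjoint (B i) (B j)) ∧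
    (∀ i, f (fun k => if k ∈ B i then !x k else x k) ≠ f x)}

/-- A multivariate polynomial is multilinear if each variable occurs with exponent
at most 1 in every monomial. -/
def Multilinear {n : ℕ} (p : MvPolynomial (Fin n) ℝ) : Prop :=
  ∀ m ∈ p.support, ∀ i : Fin n, m i ≤ 1

/-- A real polynomial `p` represents the Boolean function `f` if `p(x) = f(x)` for
all `x ∈ {0,1}^n`. -/
def Represents {n : ℕ} (p : MvPolynomial (Fin n) ℝ) (f : (Fin n → Bool) → Bool) : Prop :=
  ∀ x : Fin n → Bool, MvPolynomial.eval (fun i => bval (x i)) p = bval (f x)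

/-- A real polynomial `p` approximates the Boolean function `f` if
`|p(x) − f(x)| < 1/3` for all `x ∈ {0,1}^n`. -/
def Approximates {n : ℕ} (p : MvPolynomial (Fin n) ℝ) (f : (Fin n → Bool) → Bool) : Prop :=
  ∀ x : Fin n → Bool, |MvPolynomial.eval (fun i => bval (x i)) p - bval (f x)| < 1 / 3

/-!
Let `q(t)` be the expectation of `p` at a random point of the cube whose coordinates are
independently `1` with probability `t`. On the cube `xᵢ ^ k = xᵢ` for `k ≥ 1`, so `q` is a
polynomial of degree at most `deg p`. On `[0, 1]` it is a convex combination of values of `p`, hence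
stays in `[-ε, 1 + ε]` if `p` approximates `f` within `ε`, while
`q'(0) = ∑ᵢ (p(eᵢ) - p(0)) ≥ n (1 - 2ε)`. Markov's inequality at the endpoint `0`, a consequence of
the extremality of Chebyshev polynomials, bounds `q'(0)` by `(deg p)² (1 + 2ε)`. Error `ε = 1 / 3`
gives even `n / 5 ≤ (deg p)²`.
-/

section Markov

open Polynomial

theorem eval_one_derivative_le_sq_of_abs_le_one {P : ℝ[X]} {d : ℕ} (hdeg : P.natDegree ≤ d)
    (hbound : ∀ x ∈ Set.Icc (-1 : ℝ) 1, |P.eval x| ≤ 1) :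
    (derivative P).eval 1 ≤ (d : ℝ) ^ 2 := by
  have h := Chebyshev.eval_iterate_derivative_le_of_forall_abs_le_one (k := 1) le_rfl
    (natDegree_le_iff_degree_le.mp hdeg) hbound
  simpa only [Function.iterate_one, Chebyshev.derivative_T_eval_one, Int.cast_natCast] using h

theorem sub_mul_eval_left_derivative_le {Q : ℝ[X]} {d : ℕ} {u v a b : ℝ} (huv : u ≤ v)
    (hab : a < b) (hdeg : Q.natDegree ≤ d)
    (hQ : ∀ t ∈ Set.Icc u v, Q.eval t ∈ Set.Icc a b) :
    (v - u) * (derivative Q).eval u ≤ (d : ℝ) ^ 2 * (b - a) := by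
  have hba : 0 < b - a := sub_pos.mpr hab
  -- `P` reverses both the interval and the range, so `P' 1` is a positive multiple of `Q' u`.
  let reparam : ℝ[X] := C ((u + v) / 2) - C ((v - u) / 2) * X
  let P : ℝ[X] := C (b - a)⁻¹ * (C (a + b) - C 2 * Q.comp reparam)
  have hPdeg : P.natDegree ≤ d := by
    have hreparam : reparam.natDegree ≤ 1 := by unfold reparam; compute_degree
    have hcomp : (Q.comp reparam).natDegree ≤ d :=
      natDegree_comp_le.trans ((Nat.mul_le_mul hdeg hreparam).trans_eq (mul_one d))
    refine (natDegree_C_mul_le _ _).trans ((natDegree_sub_le _ _).trans (max_le ?_ ?_))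
    · simp only [natDegree_C, zero_le]
    · exact (natDegree_C_mul_le _ _).trans hcomp
  have hPbound : ∀ x ∈ Set.Icc (-1 : ℝ) 1, |P.eval x| ≤ 1 := by
    rintro x ⟨hx, hx'⟩
    obtain ⟨ha, hb⟩ := hQ ((u + v) / 2 - (v - u) / 2 * x)
      ⟨by nlinarith only [huv, hx'], by nlinarith only [huv, hx]⟩
    simp only [P, reparam, eval_mul, eval_sub, eval_comp, eval_C, eval_X]
    rw [abs_mul, abs_of_pos (inv_pos.mpr hba), inv_mul_le_one₀ hba, abs_le]
    constructor <;> linarith only [ha, hb]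
  have hP' : (derivative P).eval 1 = (v - u) * (derivative Q).eval u / (b - a) := by
    have hu : (u + v) / 2 - (v - u) / 2 = u := by ring
    simp only [P, reparam, derivative_mul, derivative_C, derivative_sub, derivative_comp,
      derivative_X, zero_mul, zero_add, zero_sub, mul_one, eval_mul, eval_neg, eval_C, eval_comp,
      eval_sub, eval_X, hu]
    ring
  rw [← div_le_iff₀ hba, ← hP']
  exact eval_one_derivative_le_sq_of_abs_le_one hPdeg hPbound

end Markov

section BernoulliMean

open Finset Polynomial

variable {σ R : Type*}

/-- The polynomial `t ↦ 𝔼[p(x)]`, where the coordinates of `x` are independent Bernoulli variables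
of parameter `t`. It is encoded by its coefficients: a monomial in `k` distinct variables, with
whatever positive exponents, has mean `t ^ k`. -/
noncomputable def bernoulliMean [CommSemiring R] (p : MvPolynomial σ R) : R[X] :=
  ∑ m ∈ p.support, monomial #m.support (p.coeff m)

theorem natDegree_bernoulliMean_le [CommSemiring R] (p : MvPolynomial σ R) :
    (bernoulliMean p).natDegree ≤ p.totalDegree := by
  refine natDegree_sum_le_of_forall_le _ _ fun m hm ↦ (natDegree_monomial_le _).trans ?_
  calc #m.support = ∑ _i ∈ m.support, 1 := card_eq_sum_ones _
    _ ≤ ∑ i ∈ m.support, m i :=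
      sum_le_sum fun i hi ↦ Nat.one_le_iff_ne_zero.mpr (Finsupp.mem_support_iff.mp hi)
    _ ≤ p.totalDegree := MvPolynomial.le_totalDegree hm

theorem eval_indicator_one [DecidableEq σ] [CommSemiring R]
    (p : MvPolynomial σ R) (S : Finset σ) :
    MvPolynomial.eval ((S : Set σ).indicator 1) p =
      ∑ m ∈ p.support, if m.support ⊆ S then p.coeff m else 0 := by
  rw [MvPolynomial.eval_eq]
  refine sum_congr rfl fun m _ ↦ ?_
  have hprod : ∏ i ∈ m.support, (S : Set σ).indicator (1 : σ → R) i ^ m i =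
      ∏ i ∈ m.support, if i ∈ S then 1 else 0 := by
    refine prod_congr rfl fun i hi ↦ ?_
    simp [Set.indicator_apply, ite_pow, Finsupp.mem_support_iff.mp hi]
  rw [hprod, prod_ite_zero, prod_const_one, mul_ite, mul_one, mul_zero]
  rfl

theorem sum_bernoulli_weight_of_subset [Fintype σ] [DecidableEq σ] [CommRing R]
    (A : Finset σ) (t : R) :
    ∑ S : Finset σ, (if A ⊆ S then t ^ #S * (1 - t) ^ #Sᶜ else 0) = t ^ #A := by
  have hterm (S : Finset σ) : (∏ _i ∈ S, t) * ∏ i ∈ Sᶜ, (if i ∉ A then 1 - t else 0) =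
      if A ⊆ S then t ^ #S * (1 - t) ^ #Sᶜ else 0 := by
    have hsub : (∀ i ∈ Sᶜ, i ∉ A) ↔ A ⊆ S := by
      simp only [mem_compl, not_imp_not, subset_iff]
    simp only [prod_ite_zero, prod_const, hsub, mul_ite, mul_zero]
  calc ∑ S : Finset σ, (if A ⊆ S then t ^ #S * (1 - t) ^ #Sᶜ else 0)
      = ∏ i, (t + if i ∉ A then 1 - t else 0) := by
        rw [Fintype.prod_add]
        exact sum_congr rfl fun S _ ↦ (hterm S).symm
    _ = ∏ i, (if i ∈ A then t else 1) :=
        prod_congr rfl fun i _ ↦ by by_cases hi : i ∈ A <;> simp [hi]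
    _ = t ^ #A := by simp only [prod_ite_mem, univ_inter, prod_const]

theorem eval_bernoulliMean [Fintype σ] [DecidableEq σ] [CommRing R]
    (p : MvPolynomial σ R) (t : R) :
    (bernoulliMean p).eval t = ∑ S : Finset σ,
      t ^ #S * (1 - t) ^ #Sᶜ * MvPolynomial.eval ((S : Set σ).indicator 1) p := by
  simp only [eval_indicator_one, mul_sum]
  rw [sum_comm, bernoulliMean, eval_finsetSum]
  refine sum_congr rfl fun m _ ↦ ?_
  rw [eval_monomial, ← sum_bernoulli_weight_of_subset, mul_sum]
  exact sum_congr rfl fun S _ ↦ by rw [mul_ite, mul_ite, mul_zero, mul_zero, mul_comm]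

theorem eval_bernoulliMean_mem_of_convex [Finite σ] {𝕜 : Type*} [Field 𝕜]
    [LinearOrder 𝕜] [IsStrictOrderedRing 𝕜] {p : MvPolynomial σ 𝕜} {K : Set 𝕜} (hK : Convex 𝕜 K)
    (hp : ∀ S : Finset σ, MvPolynomial.eval ((S : Set σ).indicator 1) p ∈ K)
    {t : 𝕜} (ht : t ∈ Set.Icc 0 1) : (bernoulliMean p).eval t ∈ K := by
  classical
  cases nonempty_fintype σ
  rw [eval_bernoulliMean]
  refine hK.sum_mem (fun S _ ↦ ?_) ?_ fun S _ ↦ hp S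
  · exact mul_nonneg (pow_nonneg ht.1 _) (pow_nonneg (sub_nonneg.mpr ht.2) _)
  · simpa using sum_bernoulli_weight_of_subset ∅ t

theorem sum_ite_subset_singleton_sub_ite_subset_empty [Fintype σ] [DecidableEq σ]
    [AddCommGroup R] (A : Finset σ) (c : R) :
    ∑ i, ((if A ⊆ {i} then c else 0) - if A ⊆ ∅ then c else 0) = if #A = 1 then c else 0 := by
  rcases A.eq_empty_or_nonempty with rfl | hA
  · simp
  · simp only [subset_empty, hA.ne_empty, if_false, sub_zero, hA.subset_singleton_iff]
    split_ifs with hcard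
    · obtain ⟨a, rfl⟩ := card_eq_one.mp hcard
      simp
    · exact sum_eq_zero fun i _ ↦ if_neg fun h ↦ hcard (by rw [h, card_singleton])

theorem eval_pi_single_one_sub_eval_zero [DecidableEq σ] [CommRing R]
    (p : MvPolynomial σ R) (i : σ) :
    MvPolynomial.eval (Pi.single i 1) p - MvPolynomial.eval 0 p = ∑ m ∈ p.support,
      ((if m.support ⊆ {i} then p.coeff m else 0) - if m.support ⊆ ∅ then p.coeff m else 0) := by
  rw [sum_sub_distrib, ← eval_indicator_one, ← eval_indicator_one, coe_singleton, coe_empty,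
    Set.indicator_singleton, Set.indicator_empty', Pi.one_apply]

theorem eval_zero_derivative_bernoulliMean [Fintype σ] [DecidableEq σ] [CommRing R]
    (p : MvPolynomial σ R) :
    (derivative (bernoulliMean p)).eval 0 =
      ∑ i, (MvPolynomial.eval (Pi.single i 1) p - MvPolynomial.eval 0 p) := by
  simp only [eval_pi_single_one_sub_eval_zero]
  rw [sum_comm]
  simp only [sum_ite_subset_singleton_sub_ite_subset_empty]
  rw [← coeff_zero_eq_eval_zero, coeff_derivative]
  simp [bernoulliMean, coeff_monomial]

theorem card_mul_le_sq_totalDegree_mul [Fintype σ] [DecidableEq σ]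
    {p : MvPolynomial σ ℝ} {a b δ : ℝ} (hab : a < b)
    (hrange : ∀ S : Finset σ, MvPolynomial.eval ((S : Set σ).indicator 1) p ∈ Set.Icc a b)
    (hjump : ∀ i, δ ≤ MvPolynomial.eval (Pi.single i 1) p - MvPolynomial.eval 0 p) :
    Fintype.card σ * δ ≤ (p.totalDegree : ℝ) ^ 2 * (b - a) := by
  calc Fintype.card σ * δ = ∑ _i : σ, δ := by
        rw [sum_const, card_univ, nsmul_eq_mul]
    _ ≤ (derivative (bernoulliMean p)).eval 0 := by
        rw [eval_zero_derivative_bernoulliMean]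
        exact sum_le_sum fun i _ ↦ hjump i
    _ = (1 - 0) * (derivative (bernoulliMean p)).eval 0 := by rw [sub_zero, one_mul]
    _ ≤ (p.totalDegree : ℝ) ^ 2 * (b - a) :=
        sub_mul_eval_left_derivative_le zero_le_one hab (natDegree_bernoulliMean_le p)
          fun _ ht ↦ eval_bernoulliMean_mem_of_convex (convex_Icc a b) hrange ht

end BernoulliMean

theorem bval_mem_Icc (b : Bool) : bval b ∈ Set.Icc (0 : ℝ) 1 := by
  cases b <;> simp [bval]

theorem bval_decide_mem_eq_indicator {σ : Type*} [DecidableEq σ] (S : Finset σ) :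
    (fun i ↦ bval (decide (i ∈ S))) = (S : Set σ).indicator 1 := by
  ext i
  simp [bval, Set.indicator_apply]

theorem approx_degree_ge_sqrt_sixth_n_general {σ : Type*} [Fintype σ] (f : (σ → Bool) → Bool)
    (h0 : f (fun _ ↦ false) = false)
    (h1 : ∀ x : σ → Bool, (Finset.univ.filter fun i ↦ x i = true).card = 1 → f x = true)
    (p : MvPolynomial σ ℝ) (ε : ℝ)
    (happrox : ∀ x : σ → Bool, |MvPolynomial.eval (fun i ↦ bval (x i)) p - bval (f x)| ≤ ε) :
    √(Fintype.card σ * ((1 - 2 * ε) / (1 + 2 * ε))) ≤ p.totalDegree := by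
  classical
  have hε : 0 ≤ ε := (abs_nonneg _).trans (happrox fun _ ↦ false)
  have hclose (S : Finset σ) : |MvPolynomial.eval ((S : Set σ).indicator 1) p -
      bval (f fun i ↦ decide (i ∈ S))| ≤ ε := by
    simpa only [bval_decide_mem_eq_indicator] using happrox fun i ↦ decide (i ∈ S)
  have hrange (S : Finset σ) :
      MvPolynomial.eval ((S : Set σ).indicator 1) p ∈ Set.Icc (-ε) (1 + ε) := by
    obtain ⟨hlower, hupper⟩ := abs_le.mp (hclose S)
    obtain ⟨hf, hf'⟩ := bval_mem_Icc (f fun i ↦ decide (i ∈ S))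
    constructor <;> linarith only [hlower, hupper, hf, hf']
  have hjump (i : σ) :
      1 - 2 * ε ≤ MvPolynomial.eval (Pi.single i 1) p - MvPolynomial.eval 0 p := by
    have hf : f (fun j ↦ decide (j = i)) = true :=
      h1 _ (Finset.card_eq_one.mpr ⟨i, by ext; simp⟩)
    have hone : |MvPolynomial.eval (Pi.single i 1) p - 1| ≤ ε := by
      simpa [hf, bval, Set.indicator_singleton] using hclose {i}
    have hzero : |MvPolynomial.eval 0 p| ≤ ε := by
      simpa [h0, bval] using hclose ∅
    linarith only [(abs_le.mp hone).1, (abs_le.mp hzero).2]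
  have hcard := card_mul_le_sq_totalDegree_mul (by linarith only [hε]) hrange hjump
  refine Real.sqrt_le_left (Nat.cast_nonneg _) |>.mpr ?_
  rw [← mul_div_assoc, div_le_iff₀ (by positivity)]
  exact hcard.trans_eq (by ring)

/-- If `f(0,…,0) = 0` and `f(x) = 1` for every `x` of Hamming weight 1, then the
approximate degree satisfies `deg̃ f ≥ √(n/6)`.  Since `deg̃ f` is the minimum degree
over all polynomials approximating `f`, this is equivalent to: every polynomial `p`
approximating `f` has degree at least `√(n/6)`. -/
theorem approx_degree_ge_sqrt_sixth_n (n : ℕ) (f : (Fin n → Bool) → Bool)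
    (h0 : f (fun _ => false) = false)
    (h1 : ∀ x : Fin n → Bool,
      (Finset.univ.filter fun i => x i = true).card = 1 → f x = true)
    (p : MvPolynomial (Fin n) ℝ) (happrox : Approximates p f) :
    Real.sqrt ((n : ℝ) / 6) ≤ (p.totalDegree : ℝ) := by
  have h := approx_degree_ge_sqrt_sixth_n_general f h0 h1 p (1 / 3) fun x ↦ (happrox x).le
  exact (Real.sqrt_le_sqrt (by rw [Fintype.card_fin]; linarith [n.cast_nonneg (α := ℝ)])).trans h
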